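/- arXiv:1712.01366 — 3 statements merged into one kernel-verified Lean document; each statement's English description precedes it below -/
import Mathlib

section
/- The constant 1/4 in the 3-dimensional Hardy inequality is sharp: for every a > 1/4 there exists a compactly supported smooth function u : ℝ³ → ℂ with a·∫ |u(x)|²/|x|² dx > ∫ |∇u(x)|² dx. -/
open MeasureTheory

/-- Change of variables `r = exp t` on the half-line. -/
lemma hardy_integral_exp (F : ℝ → ℝ) :
    ∫ y in Set.Ioi (0 : ℝ), F y = ∫ t, Real.exp t * F (Real.exp t) := by
  have h := integral_image_eq_integral_abs_deriv_smul (s := Set.univ) (f := Real.exp)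
    (f' := Real.exp) MeasurableSet.univ (fun x _ => (Real.hasDerivAt_exp x).hasDerivWithinAt)
    Real.exp_injective.injOn F
  rw [Set.image_univ, Real.range_exp] at h
  rw [h, Measure.restrict_univ]
  simp [abs_of_pos (Real.exp_pos _)]

/-- Radial integrals on `ℝ³` in logarithmic polar coordinates. -/
lemma hardy_polar : ∃ c : ℝ, 0 < c ∧ ∀ F : ℝ → ℝ,
    ∫ x : EuclideanSpace ℝ (Fin 3), F ‖x‖ =
      c * ∫ t, Real.exp t ^ 3 * F (Real.exp t) := by
  refine ⟨3 * (volume : Measure (EuclideanSpace ℝ (Fin 3))).real (Metric.ball 0 1), ?_, ?_⟩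
  · have : 0 < (volume : Measure (EuclideanSpace ℝ (Fin 3))).real (Metric.ball 0 1) :=
      ENNReal.toReal_pos (Metric.measure_ball_pos _ _ one_pos).ne' measure_ball_lt_top.ne
    positivity
  · intro F
    rw [integral_fun_norm_addHaar (volume : Measure (EuclideanSpace ℝ (Fin 3))) F,
      hardy_integral_exp]
    simp only [finrank_euclideanSpace, Fintype.card_fin, smul_eq_mul, nsmul_eq_mul]
    push_cast
    rw [mul_assoc]
    congr 2
    congr 1
    ext t
    ring

/-- A bump function supported in `[1, 3]`. -/
lemma hardy_bump : ∃ φ : ℝ → ℝ, ContDiff ℝ (⊤ : ℕ∞) φ ∧ HasCompactSupport φ ∧ φ 2 = 1 ∧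
    ∀ t, 1 ≤ |t - 2| → φ t = 0 := by
  let φ : ContDiffBump (2 : ℝ) := ⟨1 / 2, 1, by norm_num, by norm_num⟩
  refine ⟨φ, φ.contDiff, φ.hasCompactSupport,
    φ.one_of_mem_closedBall (Metric.mem_closedBall_self φ.rIn_pos.le), fun t ht => ?_⟩
  exact φ.zero_of_le_dist (by rw [Real.dist_eq]; exact ht)

lemma hardy_sq_support {g : ℝ → ℝ} (hs : HasCompactSupport g) :
    HasCompactSupport (fun t => g t ^ 2) := by
  have : (fun t => g t ^ 2) = g * g := by ext t; simp [sq]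
  rw [this]
  exact hs.mul_right

lemma hardy_sq_integrable {g : ℝ → ℝ} (hg : Continuous g) (hs : HasCompactSupport g) :
    Integrable (fun t => g t ^ 2) := by
  have hc : Continuous (fun t => g t ^ 2) := by fun_prop
  exact hc.integrable_of_hasCompactSupport (hardy_sq_support hs)

/-- The one-dimensional profile. -/
lemma hardy_profile (a : ℝ) (ha : 1 / 4 < a) : ∃ f : ℝ → ℝ, ContDiff ℝ (⊤ : ℕ∞) f ∧
    HasCompactSupport f ∧ (∀ t ≤ 0, f t = 0) ∧
    ∫ t, (deriv f t - f t / 2) ^ 2 < a * ∫ t, f t ^ 2 := by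
  obtain ⟨φ, hφ, hφs, hφ2, hφ0⟩ := hardy_bump
  have hφd : Continuous (deriv φ) := hφ.continuous_deriv (by simp)
  set A := ∫ t, φ t ^ 2 with hA
  set B := ∫ t, deriv φ t ^ 2 with hB
  have hApos : 0 < A := by
    apply Continuous.integral_pos_of_hasCompactSupport_nonneg_nonzero (x := 2)
    · exact hφ.continuous.pow 2
    · exact hardy_sq_support hφs
    · intro t; positivity
    · simp [hφ2]
  obtain ⟨R, hR1, hR⟩ : ∃ R : ℝ, 1 ≤ R ∧ B < (a - 1 / 4) * A * R := by
    have hpos : 0 < (a - 1 / 4) * A := mul_pos (by linarith) hApos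
    refine ⟨max 1 (B / ((a - 1 / 4) * A) + 1), le_max_left _ _, ?_⟩
    have h1 := le_max_right 1 (B / ((a - 1 / 4) * A) + 1)
    rw [mul_comm, ← div_lt_iff₀ hpos]
    linarith
  have hR0 : 0 < R := by linarith
  let f : ℝ → ℝ := fun t => φ (t / R)
  have hf : ContDiff ℝ (⊤ : ℕ∞) f := hφ.comp (contDiff_id.div_const R)
  have hfd : ∀ t, deriv f t = deriv φ (t / R) / R := by
    intro t
    have h1 : HasDerivAt φ (deriv φ (t / R)) (t / R) :=
      (hφ.differentiable (by simp) _).hasDerivAt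
    have h2 := h1.comp t ((hasDerivAt_id t).div_const R)
    rw [show f = φ ∘ fun x => id x / R from rfl, h2.deriv]
    ring
  have hfs : HasCompactSupport f := by
    apply HasCompactSupport.intro (isCompact_Icc (a := 0) (b := 3 * R))
    intro t ht
    apply hφ0
    rw [Set.mem_Icc, not_and_or] at ht
    rcases ht with h | h
    · have : t / R ≤ 0 := div_nonpos_of_nonpos_of_nonneg (by linarith) hR0.le
      rw [le_abs]; right; linarith
    · have : 3 ≤ t / R := by rw [le_div_iff₀ hR0]; linarith
      rw [le_abs]; left; linarith
  have hfc := hf.continuous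
  have hfdc : Continuous (deriv f) := hf.continuous_deriv (by simp)
  have i1 : Integrable (fun t => deriv f t ^ 2) :=
    hardy_sq_integrable hfdc hfs.deriv
  have i2 : Integrable (fun t => f t ^ 2) :=
    hardy_sq_integrable hfc hfs
  have i3 : Integrable (fun t => f t * deriv f t) :=
    (hfc.mul hfdc).integrable_of_hasCompactSupport hfs.mul_right
  have i4 : Integrable (fun t => f t * f t) :=
    (hfc.mul hfc).integrable_of_hasCompactSupport hfs.mul_right
  have cross : ∫ t, f t * deriv f t = 0 := by
    have hd : ∀ t, HasDerivAt f (deriv f t) t := fun t =>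
      (hf.differentiable (by simp) t).hasDerivAt
    have h := integral_mul_deriv_eq_deriv_mul_of_integrable (u := f) (v := f)
      (u' := deriv f) (v' := deriv f)
      (fun t _ => hd t) (fun t _ => hd t) i3 (by simpa [mul_comm, Pi.mul_def] using i3) i4
    have h' : ∫ t, deriv f t * f t = ∫ t, f t * deriv f t := by simp only [mul_comm]
    linarith
  have e1 : ∫ t, f t ^ 2 = R * A := by
    have := Measure.integral_comp_div (fun t => φ t ^ 2) R
    simp only [f]
    rw [this, abs_of_pos hR0, smul_eq_mul]
  have e2 : ∫ t, deriv f t ^ 2 = B / R := by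
    have := Measure.integral_comp_div (fun t => deriv φ t ^ 2) R
    simp only [hfd, div_pow]
    rw [integral_div, this, abs_of_pos hR0, smul_eq_mul]
    rw [← hB]
    field_simp
  refine ⟨f, hf, hfs, ?_, ?_⟩
  · intro t ht
    apply hφ0
    have : t / R ≤ 0 := div_nonpos_of_nonpos_of_nonneg (by linarith) hR0.le
    rw [le_abs]; right; linarith
  · have e3 : ∫ t, (deriv f t - f t / 2) ^ 2 = B / R + 1 / 4 * (R * A) := by
      have : ∀ t, (deriv f t - f t / 2) ^ 2 =
          (deriv f t ^ 2 + 1 / 4 * f t ^ 2) - f t * deriv f t := fun t => by ring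
      simp only [this]
      have i5 : Integrable (fun t => deriv f t ^ 2 + 1 / 4 * f t ^ 2) :=
        i1.add (i2.const_mul _)
      rw [integral_sub i5 i3, integral_add i1 (i2.const_mul _),
        integral_const_mul, cross, e1, e2, sub_zero]
    rw [e3, e1]
    have h5 : B / R < (a - 1 / 4) * A := by rw [div_lt_iff₀ hR0]; exact hR
    have h6 : (a - 1 / 4) * A ≤ (a - 1 / 4) * A * R :=
      le_mul_of_one_le_right (mul_nonneg (by linarith) hApos.le) hR1
    nlinarith

/-- Sharpness of the constant `1/4` in the 3-dimensional Hardy inequality: for every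
`a > 1/4` there is a compactly supported smooth `u : ℝ³ → ℂ` with
`a ∫ |u|²/|x|² > ∫ |∇u|²`. -/
theorem hardy_inequality_dim3_sharp (a : ℝ) (ha : 1 / 4 < a) :
    ∃ u : EuclideanSpace ℝ (Fin 3) → ℂ, ContDiff ℝ (⊤ : ℕ∞) u ∧ HasCompactSupport u ∧
      a * ∫ x : EuclideanSpace ℝ (Fin 3), ‖u x‖ ^ 2 / ‖x‖ ^ 2 >
        ∫ x : EuclideanSpace ℝ (Fin 3), ‖fderiv ℝ u x‖ ^ 2 := by
  obtain ⟨f, hf, hfs, hf0, hlt⟩ := hardy_profile a ha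
  obtain ⟨c, hc, hpolar⟩ := hardy_polar
  let G : ℝ → ℝ := fun t => f t * Real.exp (-t / 2)
  have hG : ContDiff ℝ (⊤ : ℕ∞) G :=
    hf.mul (Real.contDiff_exp.comp (contDiff_id.neg.div_const 2))
  have hGd : ∀ t, HasDerivAt G ((deriv f t - f t / 2) * Real.exp (-t / 2)) t := by
    intro t
    have h1 : HasDerivAt f (deriv f t) t := (hf.differentiable (by simp) t).hasDerivAt
    have h2 : HasDerivAt (fun t : ℝ => Real.exp (-t / 2)) (Real.exp (-t / 2) * (-1 / 2)) t :=
      ((hasDerivAt_id t).neg.div_const 2).exp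
    exact (h1.mul h2).congr_deriv (by ring)
  let u : EuclideanSpace ℝ (Fin 3) → ℂ := fun x => ((G (Real.log ‖x‖) : ℝ) : ℂ)
  have hu0 : ∀ x : EuclideanSpace ℝ (Fin 3), ‖x‖ ≤ 1 → u x = 0 := by
    intro x hx
    have : f (Real.log ‖x‖) = 0 := hf0 _ (Real.log_nonpos (norm_nonneg _) hx)
    simp [u, G, this]
  have hus : ContDiff ℝ (⊤ : ℕ∞) u := by
    rw [contDiff_iff_contDiffAt]
    intro x
    by_cases hx : x = 0
    · have : u =ᶠ[nhds x] fun _ => 0 := by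
        filter_upwards [Metric.ball_mem_nhds x one_pos] with y hy
        apply hu0
        rw [hx] at hy
        simpa using (mem_ball_zero_iff.1 hy).le
      exact contDiffAt_const.congr_of_eventuallyEq this
    · have h1 : ContDiffAt ℝ (⊤ : ℕ∞) (fun x : EuclideanSpace ℝ (Fin 3) => Real.log ‖x‖) x :=
        (contDiffAt_norm ℝ hx).log (norm_ne_zero_iff.2 hx)
      exact Complex.ofRealCLM.contDiff.contDiffAt.comp x (hG.contDiffAt.comp x h1)
  have huc : HasCompactSupport u := by
    obtain ⟨M, hM⟩ := hfs.isCompact.isBounded.subset_closedBall 0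
    apply HasCompactSupport.intro (isCompact_closedBall 0 (Real.exp M))
    intro x hx
    rw [mem_closedBall_zero_iff, not_le] at hx
    have hx' : M < Real.log ‖x‖ := (Real.lt_log_iff_exp_lt ((Real.exp_pos _).trans hx)).2 hx
    have : f (Real.log ‖x‖) = 0 := by
      apply image_eq_zero_of_notMem_tsupport
      intro h
      have := hM h
      rw [mem_closedBall_zero_iff, Real.norm_eq_abs] at this
      linarith [le_abs_self (Real.log ‖x‖)]
    simp [u, G, this]
  have hexp : ∀ t, Real.exp t * Real.exp (-t / 2) ^ 2 = 1 := by
    intro t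
    rw [← Real.exp_nat_mul, ← Real.exp_add]
    norm_num
    ring
  refine ⟨u, hus, huc, ?_⟩
  have I1 : ∫ x : EuclideanSpace ℝ (Fin 3), ‖u x‖ ^ 2 / ‖x‖ ^ 2 = c * ∫ t, f t ^ 2 := by
    have := hpolar (fun r => G (Real.log r) ^ 2 / r ^ 2)
    simp only [u, Complex.norm_real, Real.norm_eq_abs, sq_abs]
    rw [this]
    congr 2
    ext t
    have he := (Real.exp_pos t).ne'
    simp only [Real.log_exp, G]
    calc _ = f t ^ 2 * (Real.exp t * Real.exp (-t / 2) ^ 2) := by field_simp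
      _ = _ := by rw [hexp, mul_one]
  have I2 : ∫ x : EuclideanSpace ℝ (Fin 3), ‖fderiv ℝ u x‖ ^ 2 =
      c * ∫ t, (deriv f t - f t / 2) ^ 2 := by
    let H : ℝ → ℝ := fun r =>
      (deriv f (Real.log r) - f (Real.log r) / 2) * Real.exp (-Real.log r / 2) * r⁻¹
    have hae : ∫ x : EuclideanSpace ℝ (Fin 3), ‖fderiv ℝ u x‖ ^ 2 =
        ∫ x : EuclideanSpace ℝ (Fin 3), H ‖x‖ ^ 2 := by
      apply integral_congr_ae
      filter_upwards [Measure.ae_ne volume (0 : EuclideanSpace ℝ (Fin 3))] with x hx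
      have hn : ‖x‖ ≠ 0 := norm_ne_zero_iff.2 hx
      have d1 : DifferentiableAt ℝ (fun x : EuclideanSpace ℝ (Fin 3) => ‖x‖) x :=
        (contDiffAt_norm ℝ (n := 1) hx).differentiableAt (by simp)
      have d2 : HasDerivAt (fun r : ℝ => ((G (Real.log r) : ℝ) : ℂ)) ((H ‖x‖ : ℝ) : ℂ) ‖x‖ :=
        ((hGd (Real.log ‖x‖)).comp ‖x‖ (Real.hasDerivAt_log hn)).ofReal_comp
      have d3 := d2.hasFDerivAt.comp x d1.hasFDerivAt
      have d4 : fderiv ℝ u x = _ := d3.fderiv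
      have d5 : ‖fderiv ℝ u x‖ = |H ‖x‖| := by
        have : fderiv ℝ u x = (fderiv ℝ (fun x : EuclideanSpace ℝ (Fin 3) => ‖x‖) x).smulRight
            ((H ‖x‖ : ℝ) : ℂ) := by
          rw [d4]; ext v; simp
        rw [this, ContinuousLinearMap.norm_smulRight_apply, norm_fderiv_norm d1, one_mul,
          Complex.norm_real, Real.norm_eq_abs]
      rw [d5, sq_abs]
    rw [hae, hpolar (fun r => H r ^ 2)]
    congr 2
    ext t
    have he := (Real.exp_pos t).ne'
    simp only [Real.log_exp, H]
    calc _ = (deriv f t - f t / 2) ^ 2 * (Real.exp t * Real.exp (-t / 2) ^ 2) := by field_simp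
      _ = _ := by rw [hexp, mul_one]
  rw [I1, I2]
  have := mul_lt_mul_of_pos_left hlt hc
  linarith
end

section
/- Define K(x,y) = e^{-|x-y|}/|x-y| - ∫_{S²} e^{-||x|ω - y|}/||x|ω - y| dσ(ω), where σ is the uniform probability measure on S². Then for x, y ∈ ℝ³ with 2|y| < |x|, |K(x,y)| ≤ C·|y|·|x|^{-2}·e^{-|x|/4} for some absolute constant C. -/
open MeasureTheory

/-- The uniform probability measure on the unit sphere `S² ⊂ ℝ³`. -/
noncomputable def sphereProb :
    Measure (Metric.sphere (0 : EuclideanSpace ℝ (Fin 3)) 1) :=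
  (((volume : Measure (EuclideanSpace ℝ (Fin 3))).toSphere Set.univ)⁻¹) •
    (volume : Measure (EuclideanSpace ℝ (Fin 3))).toSphere

/-- The angular part of the Yukawa kernel. -/
noncomputable def angularYukawa (x y : EuclideanSpace ℝ (Fin 3)) : ℝ :=
  Real.exp (-‖x - y‖) / ‖x - y‖ -
    ∫ ω, Real.exp (-‖‖x‖ • (ω : EuclideanSpace ℝ (Fin 3)) - y‖) /
      ‖‖x‖ • (ω : EuclideanSpace ℝ (Fin 3)) - y‖ ∂sphereProb

instance sphereProb_isProb : IsProbabilityMeasure sphereProb := by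
  have hne : (volume : Measure (EuclideanSpace ℝ (Fin 3))).toSphere ≠ 0 := by
    intro h
    have h' := (volume : Measure (EuclideanSpace ℝ (Fin 3))).toSphere_apply_univ
    rw [h] at h'
    simp only [Measure.coe_zero, Pi.zero_apply] at h'
    have hb : 0 < volume (Metric.ball (0 : EuclideanSpace ℝ (Fin 3)) 1) :=
      Metric.measure_ball_pos _ _ one_pos
    have := mul_eq_zero.mp h'.symm
    simp at this
    linarith [Real.pi_pos]
  have : NeZero (volume : Measure (EuclideanSpace ℝ (Fin 3))).toSphere := ⟨hne⟩
  unfold sphereProb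
  infer_instance

lemma yukawa_aux {R a b : ℝ} (hR : 0 < R) (ha : R / 2 ≤ a) (hab : a ≤ b) :
    |Real.exp (-a) / a - Real.exp (-b) / b| ≤
      12 * (b - a) * R⁻¹ ^ 2 * Real.exp (-R / 4) := by
  have ha0 : 0 < a := by linarith
  have hb0 : 0 < b := by linarith
  have hba : 0 ≤ b - a := by linarith
  have hE : 0 < Real.exp (-R / 4) := Real.exp_pos _
  have h0 : Real.exp (-b) ≤ Real.exp (-a) := Real.exp_le_exp.mpr (by linarith)
  have h1 : Real.exp (-a) ≤ Real.exp (-R / 4) * Real.exp (-R / 4) := by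
    rw [← Real.exp_add]
    exact Real.exp_le_exp.mpr (by linarith)
  have h2 : R * Real.exp (-R / 4) ≤ 4 := by
    have h := Real.add_one_le_exp (R / 4)
    have h' : Real.exp (R / 4) * Real.exp (-R / 4) = 1 := by
      rw [← Real.exp_add]
      simp [neg_div]
    nlinarith
  have h3 : Real.exp (-R / 4) ≤ 1 := Real.exp_le_one_iff.mpr (by linarith)
  have h4 : Real.exp (-a) - Real.exp (-b) ≤ Real.exp (-a) * (b - a) := by
    have h := Real.add_one_le_exp (a - b)
    have h' : Real.exp (-b) = Real.exp (-a) * Real.exp (a - b) := by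
      rw [← Real.exp_add]
      congr 1
      ring
    rw [h']
    nlinarith [Real.exp_pos (-a)]
  have hnn : 0 ≤ Real.exp (-a) / a - Real.exp (-b) / b := by
    have : Real.exp (-b) / b ≤ Real.exp (-a) / a := by
      gcongr
    linarith
  rw [abs_of_nonneg hnn]
  have hai : a⁻¹ ≤ 2 * R⁻¹ := by
    have : a⁻¹ ≤ (R / 2)⁻¹ := inv_anti₀ (by positivity) ha
    rwa [inv_div, div_eq_mul_inv] at this
  have hbi : b⁻¹ ≤ 2 * R⁻¹ := (inv_anti₀ ha0 hab).trans hai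
  have hRi : 0 < R⁻¹ := by positivity
  have hRR : R * R⁻¹ = 1 := mul_inv_cancel₀ hR.ne'
  calc Real.exp (-a) / a - Real.exp (-b) / b
      = Real.exp (-a) * (b - a) * (a⁻¹ * b⁻¹) + (Real.exp (-a) - Real.exp (-b)) * b⁻¹ := by
        field_simp
        ring
    _ ≤ Real.exp (-a) * (b - a) * ((2 * R⁻¹) * (2 * R⁻¹))
        + (Real.exp (-a) * (b - a)) * (2 * R⁻¹) := by
        gcongr
    _ = Real.exp (-a) * ((b - a) * (R⁻¹ ^ 2 * (4 + 2 * R))) := by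
        field_simp
        ring
    _ ≤ (Real.exp (-R / 4) * Real.exp (-R / 4)) * ((b - a) * (R⁻¹ ^ 2 * (4 + 2 * R))) := by
        gcongr
    _ = (b - a) * R⁻¹ ^ 2 * Real.exp (-R / 4) *
        (4 * Real.exp (-R / 4) + 2 * (R * Real.exp (-R / 4))) := by ring
    _ ≤ (b - a) * R⁻¹ ^ 2 * Real.exp (-R / 4) * 12 := by
        gcongr
        linarith
    _ = _ := by ring

lemma yukawa_aux2 {R a b d : ℝ} (hR : 0 < R) (ha : R / 2 ≤ a) (hb : R / 2 ≤ b)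
    (hd : |a - b| ≤ d) :
    |Real.exp (-a) / a - Real.exp (-b) / b| ≤ 12 * d * R⁻¹ ^ 2 * Real.exp (-R / 4) := by
  obtain ⟨hd1, hd2⟩ := abs_le.mp hd
  rcases le_total a b with h | h
  · refine (yukawa_aux hR ha h).trans ?_
    gcongr
    linarith
  · rw [abs_sub_comm]
    refine (yukawa_aux hR hb h).trans ?_
    gcongr

/-- For `2|y| < |x|`, the angular part of the Yukawa kernel satisfies
`|K(x,y)| ≤ C |y| |x|⁻² e^{-|x|/4}` for an absolute constant `C`. -/
theorem angularYukawa_bound_far :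
    ∃ C : ℝ, 0 < C ∧ ∀ x y : EuclideanSpace ℝ (Fin 3), 2 * ‖y‖ < ‖x‖ →
      |angularYukawa x y| ≤ C * ‖y‖ * ‖x‖⁻¹ ^ 2 * Real.exp (-‖x‖ / 4) := by
  refine ⟨24, by norm_num, fun x y hxy => ?_⟩
  have hR : 0 < ‖x‖ := by linarith [norm_nonneg y]
  have key : ∀ z : EuclideanSpace ℝ (Fin 3), ‖z‖ = ‖x‖ →
      ‖x‖ - ‖y‖ ≤ ‖z - y‖ ∧ ‖z - y‖ ≤ ‖x‖ + ‖y‖ := fun z hz =>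
    ⟨hz ▸ norm_sub_norm_le z y, hz ▸ norm_sub_le z y⟩
  have hω : ∀ ω : Metric.sphere (0 : EuclideanSpace ℝ (Fin 3)) 1,
      ‖‖x‖ • (ω : EuclideanSpace ℝ (Fin 3))‖ = ‖x‖ := fun ω => by
    simp [norm_smul]
  have hcont : Continuous fun ω : Metric.sphere (0 : EuclideanSpace ℝ (Fin 3)) 1 =>
      Real.exp (-‖‖x‖ • (ω : EuclideanSpace ℝ (Fin 3)) - y‖) /
        ‖‖x‖ • (ω : EuclideanSpace ℝ (Fin 3)) - y‖ := by
    refine Continuous.div (by fun_prop) (by fun_prop) fun ω => ?_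
    have := (key _ (hω ω)).1
    have : 0 < ‖‖x‖ • (ω : EuclideanSpace ℝ (Fin 3)) - y‖ := by linarith [norm_nonneg y]
    exact this.ne'
  have hint : Integrable (fun ω : Metric.sphere (0 : EuclideanSpace ℝ (Fin 3)) 1 =>
      Real.exp (-‖‖x‖ • (ω : EuclideanSpace ℝ (Fin 3)) - y‖) /
        ‖‖x‖ • (ω : EuclideanSpace ℝ (Fin 3)) - y‖) sphereProb :=
    hcont.integrable_of_hasCompactSupport (HasCompactSupport.of_compactSpace _)
  have heq : angularYukawa x y = ∫ ω, (Real.exp (-‖x - y‖) / ‖x - y‖ -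
      Real.exp (-‖‖x‖ • (ω : EuclideanSpace ℝ (Fin 3)) - y‖) /
        ‖‖x‖ • (ω : EuclideanSpace ℝ (Fin 3)) - y‖) ∂sphereProb := by
    rw [integral_sub (integrable_const _) hint]
    simp [angularYukawa]
  rw [heq, ← Real.norm_eq_abs]
  have hb := norm_integral_le_of_norm_le_const (μ := sphereProb)
    (C := 24 * ‖y‖ * ‖x‖⁻¹ ^ 2 * Real.exp (-‖x‖ / 4))
    (f := fun ω : Metric.sphere (0 : EuclideanSpace ℝ (Fin 3)) 1 =>
      Real.exp (-‖x - y‖) / ‖x - y‖ -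
      Real.exp (-‖‖x‖ • (ω : EuclideanSpace ℝ (Fin 3)) - y‖) /
        ‖‖x‖ • (ω : EuclideanSpace ℝ (Fin 3)) - y‖)
    (Filter.Eventually.of_forall fun ω => by
      obtain ⟨h1, h2⟩ := key x rfl
      obtain ⟨h3, h4⟩ := key _ (hω ω)
      have := yukawa_aux2 (d := 2 * ‖y‖) hR (a := ‖x - y‖)
        (b := ‖‖x‖ • (ω : EuclideanSpace ℝ (Fin 3)) - y‖)
        (by linarith) (by linarith) (abs_le.mpr ⟨by linarith, by linarith⟩)
      rw [Real.norm_eq_abs]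
      refine this.trans (le_of_eq (by ring)))
  simpa using hb
end

section
/- Fix y ∈ ℝ³ \ {0} and p ∈ ℝ with |p| < 3/2. Define K(x) = e^{-|x-y|}/|x-y| - ∫_{S²} e^{-||x|ω-y|}/||x|ω-y| dσ(ω). Then the L² norm over ℝ³ of x ↦ |x|^{-1±p}·K(x) is bounded by C_p · |y|^{±p} · min(|y|^{-1/2}, |y|^{-1}). -/
open MeasureTheory

/-- Three-dimensional Euclidean space. -/
abbrev E3 := EuclideanSpace ℝ (Fin 3)

theorem polar_lintegral (F : E3 → ENNReal) (hF : Measurable F) :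
    ∫⁻ x, F x = ∫⁻ r in Set.Ioi (0 : ℝ), ENNReal.ofReal (r ^ 2) *
      ∫⁻ ω, F (r • (ω : E3)) ∂(volume : Measure E3).toSphere := by
  have h1 : ∫⁻ x, F x = ∫⁻ x : ({(0 : E3)}ᶜ : Set E3), F x.1 ∂((volume : Measure E3).comap (↑)) := by
    rw [lintegral_subtype_comap (measurableSet_singleton _).compl, restrict_compl_singleton]
  have h2 := (volume : Measure E3).measurePreserving_homeomorphUnitSphereProd
  have h3 : ∫⁻ x : ({(0 : E3)}ᶜ : Set E3), F x.1 ∂((volume : Measure E3).comap (↑)) =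
      ∫⁻ z, F (((homeomorphUnitSphereProd E3).symm z : E3))
        ∂((volume : Measure E3).toSphere.prod (Measure.volumeIoiPow (Module.finrank ℝ E3 - 1))) := by
    rw [← h2.lintegral_comp_emb (Homeomorph.measurableEmbedding _)]
    simp
  have hm : Measurable fun z : (Metric.sphere (0 : E3) 1) × (Set.Ioi (0 : ℝ)) =>
      F (((homeomorphUnitSphereProd E3).symm z : E3)) :=
    hF.comp (measurable_subtype_coe.comp (homeomorphUnitSphereProd E3).symm.measurable)
  rw [h1, h3, lintegral_prod_symm' _ hm]
  have hfr : Module.finrank ℝ E3 - 1 = 2 := by simp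
  rw [hfr, Measure.volumeIoiPow, lintegral_withDensity_eq_lintegral_mul _ (by fun_prop)
    hm.lintegral_prod_left']
  rw [← lintegral_subtype_comap measurableSet_Ioi]
  refine lintegral_congr fun r => ?_
  simp

theorem sphere_univ_ne_zero : (volume : Measure E3).toSphere Set.univ ≠ 0 := by
  rw [Ne, Measure.measure_univ_eq_zero]
  exact Measure.toSphere_ne_zero _

instance : IsProbabilityMeasure sphereProb := by
  constructor
  rw [sphereProb, Measure.smul_apply, smul_eq_mul]
  exact ENNReal.inv_mul_cancel sphere_univ_ne_zero (measure_ne_top _ _)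

theorem radial_lintegral (φ : ℝ → ENNReal) (hφ : Measurable φ) :
    ∫⁻ x : E3, φ ‖x‖ = (volume : Measure E3).toSphere Set.univ *
      ∫⁻ r in Set.Ioi (0 : ℝ), ENNReal.ofReal (r ^ 2) * φ r := by
  rw [polar_lintegral _ (by fun_prop), ← lintegral_const_mul _ (by fun_prop)]
  refine setLIntegral_congr_fun measurableSet_Ioi fun r hr => ?_
  have : ∀ ω : Metric.sphere (0 : E3) 1, ‖r • (ω : E3)‖ = r := fun ω => by
    rw [norm_smul, norm_eq_of_mem_sphere]; simp [abs_of_pos hr.out]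
  simp only [this, lintegral_const]
  ring

theorem average_lintegral (F : E3 → ENNReal) (hF : Measurable F) :
    ∫⁻ x : E3, ∫⁻ ω, F (‖x‖ • (ω : E3)) ∂sphereProb = ∫⁻ x, F x := by
  have hm : Measurable fun r : ℝ => ∫⁻ ω, F (r • (ω : E3)) ∂sphereProb := by
    apply Measurable.lintegral_prod_right' (f := fun z : ℝ × Metric.sphere (0 : E3) 1 =>
      F (z.1 • (z.2 : E3)))
    fun_prop
  rw [radial_lintegral (fun r : ℝ => ∫⁻ ω, F (r • (ω : E3)) ∂sphereProb) hm, polar_lintegral F hF,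
    ← lintegral_const_mul _ (by fun_prop)]
  refine lintegral_congr fun r => ?_
  rw [sphereProb, lintegral_smul_measure, smul_eq_mul, mul_left_comm]
  rw [ENNReal.mul_inv_cancel_left sphere_univ_ne_zero (measure_ne_top _ _)]

theorem jensen_sq (f : Metric.sphere (0 : E3) 1 → ENNReal) (hf : Measurable f) :
    (∫⁻ ω, f ω ∂sphereProb) ^ 2 ≤ ∫⁻ ω, f ω ^ 2 ∂sphereProb := by
  have h := ENNReal.lintegral_mul_le_Lp_mul_Lq sphereProb (Real.HolderConjugate.two_two)
    hf.aemeasurable (g := fun _ => 1) aemeasurable_const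
  simp only [Pi.mul_apply, mul_one, ENNReal.one_rpow, lintegral_const, measure_univ] at h
  have h' := pow_le_pow_left' h 2
  refine h'.trans_eq ?_
  rw [← ENNReal.rpow_natCast, ← ENNReal.rpow_mul]
  norm_num

theorem yuk_diff {a b m : ℝ} (hm : 0 < m) (ha : m ≤ a) (hb : m ≤ b) :
    |Real.exp (-a) / a - Real.exp (-b) / b| ≤ |a - b| * (Real.exp (-m) * (1 + m) / m ^ 2) := by
  wlog hab : a ≤ b generalizing a b
  · rw [abs_sub_comm, abs_sub_comm a]
    exact this hb ha (le_of_not_ge hab)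
  have ha0 : 0 < a := hm.trans_le ha
  have hb0 : 0 < b := hm.trans_le hb
  have e1 : Real.exp (-b) ≤ Real.exp (-a) := Real.exp_le_exp.2 (by linarith)
  have e2 : Real.exp (-a) ≤ Real.exp (-m) := Real.exp_le_exp.2 (by linarith)
  have e3 : Real.exp (-a) - Real.exp (-b) ≤ Real.exp (-a) * (b - a) := by
    have : Real.exp (-b) = Real.exp (-a) * Real.exp (a - b) := by
      rw [← Real.exp_add]; ring_nf
    have h2 := Real.add_one_le_exp (a - b)
    rw [this]
    nlinarith [Real.exp_pos (-a)]
  have hnn : 0 ≤ Real.exp (-a) / a - Real.exp (-b) / b := by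
    rw [sub_nonneg]
    gcongr
  rw [abs_of_nonneg hnn, abs_sub_comm, abs_of_nonneg (by linarith : 0 ≤ b - a)]
  have key : Real.exp (-a) / a - Real.exp (-b) / b =
      (Real.exp (-a) - Real.exp (-b)) / a + Real.exp (-b) * (b - a) / (a * b) := by
    field_simp
    ring
  have hba : 0 ≤ b - a := by linarith
  have t1 : (Real.exp (-a) - Real.exp (-b)) / a ≤ Real.exp (-m) * (b - a) / m := by
    calc _ ≤ Real.exp (-a) * (b - a) / a := by gcongr
      _ ≤ _ := by gcongr
  have t2 : Real.exp (-b) * (b - a) / (a * b) ≤ Real.exp (-m) * (b - a) / (m * m) := by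
    gcongr
  rw [key]
  refine (add_le_add t1 t2).trans_eq ?_
  field_simp
  ring

theorem decay_sq {m : ℝ} (hm : 0 < m) :
    (Real.exp (-m) * (1 + m)) ^ 2 ≤ 2 * min 1 m⁻¹ := by
  have h1 : Real.exp (-m) * (1 + m) ≤ 1 := by
    have := Real.add_one_le_exp m
    rw [Real.exp_neg, inv_mul_le_one₀ (Real.exp_pos m)]
    linarith
  have h2 : Real.exp (-m) * (1 + m) ≤ 2 * m⁻¹ := by
    have := Real.quadratic_le_exp_of_nonneg hm.le
    rw [Real.exp_neg, inv_mul_le_iff₀ (Real.exp_pos m), ← mul_assoc, ← div_eq_mul_inv,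
      le_div_iff₀ hm]
    nlinarith
  have h0 : 0 ≤ Real.exp (-m) * (1 + m) := by positivity
  rw [mul_min_of_nonneg _ _ (by norm_num), le_min_iff]
  constructor <;> nlinarith

theorem K_le (x y : E3) (B : ℝ)
    (h : ∀ ω : Metric.sphere (0 : E3) 1, |Real.exp (-‖x - y‖) / ‖x - y‖ -
      Real.exp (-‖‖x‖ • (ω : E3) - y‖) / ‖‖x‖ • (ω : E3) - y‖| ≤ B) :
    |angularYukawa x y| ≤ B := by
  have hint : Integrable (fun ω : Metric.sphere (0 : E3) 1 =>
      Real.exp (-‖‖x‖ • (ω : E3) - y‖) / ‖‖x‖ • (ω : E3) - y‖) sphereProb := by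
    refine Integrable.of_bound (Measurable.aestronglyMeasurable (by fun_prop))
      (|Real.exp (-‖x - y‖) / ‖x - y‖| + B) (Filter.Eventually.of_forall fun ω => ?_)
    have h1 := h ω
    rw [Real.norm_eq_abs]
    have h2 := abs_sub_abs_le_abs_sub (Real.exp (-‖‖x‖ • (ω : E3) - y‖) / ‖‖x‖ • (ω : E3) - y‖)
      (Real.exp (-‖x - y‖) / ‖x - y‖)
    rw [abs_sub_comm] at h1
    linarith
  have : angularYukawa x y = ∫ ω : Metric.sphere (0 : E3) 1, (Real.exp (-‖x - y‖) / ‖x - y‖ -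
      Real.exp (-‖‖x‖ • (ω : E3) - y‖) / ‖‖x‖ • (ω : E3) - y‖) ∂sphereProb := by
    rw [integral_sub (integrable_const _) hint]
    simp [angularYukawa]
  rw [this, ← Real.norm_eq_abs]
  refine (norm_integral_le_of_norm_le_const (Filter.Eventually.of_forall h)).trans_eq ?_
  simp

theorem K_sq_le (x y : E3) (B m : ℝ) (hm : 0 < m)
    (hx : m ≤ ‖x - y‖) (hω : ∀ ω : Metric.sphere (0 : E3) 1, m ≤ ‖‖x‖ • (ω : E3) - y‖)
    (hB : ∀ ω : Metric.sphere (0 : E3) 1, |‖x - y‖ - ‖‖x‖ • (ω : E3) - y‖| ≤ B) (hB0 : 0 ≤ B) :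
    angularYukawa x y ^ 2 ≤ B ^ 2 * (2 * min 1 m⁻¹) / m ^ 4 := by
  have h := K_le x y (B * (Real.exp (-m) * (1 + m) / m ^ 2)) fun ω =>
    (yuk_diff hm hx (hω ω)).trans (by gcongr; exact hB ω)
  have h2 : angularYukawa x y ^ 2 ≤ (B * (Real.exp (-m) * (1 + m) / m ^ 2)) ^ 2 := by
    rw [← sq_abs]
    gcongr
  refine h2.trans ?_
  calc _ = B ^ 2 * (Real.exp (-m) * (1 + m)) ^ 2 / m ^ 4 := by field_simp
    _ ≤ _ := by gcongr; exact decay_sq hm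

theorem inner_integral {α R : ℝ} (hα : -3 < α) (hR : 0 < R) :
    ∫⁻ x : E3, (Set.Ioc 0 R).indicator (fun r : ℝ => ENNReal.ofReal (r ^ α)) ‖x‖ =
      (volume : Measure E3).toSphere Set.univ * ENNReal.ofReal (R ^ (α + 3) / (α + 3)) := by
  rw [radial_lintegral _ (Measurable.indicator (by fun_prop) measurableSet_Ioc)]
  congr 1
  have h1 : ∀ r : ℝ, ENNReal.ofReal (r ^ 2) *
      (Set.Ioc 0 R).indicator (fun r : ℝ => ENNReal.ofReal (r ^ α)) r =
      (Set.Ioc 0 R).indicator (fun r : ℝ => ENNReal.ofReal (r ^ (α + 2))) r := by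
    intro r
    by_cases hr : r ∈ Set.Ioc 0 R
    · rw [Set.indicator_of_mem hr, Set.indicator_of_mem hr, ← ENNReal.ofReal_mul (by positivity),
        Real.rpow_add hr.1, mul_comm, Real.rpow_two]
    · simp [Set.indicator_of_notMem hr]
  simp_rw [h1]
  rw [setLIntegral_indicator measurableSet_Ioc,
    Set.inter_eq_left.2 Set.Ioc_subset_Ioi_self,
    ← ofReal_integral_eq_lintegral_ofReal
      (intervalIntegral.intervalIntegrable_rpow' (by linarith : -1 < α + 2)).1,
    ← intervalIntegral.integral_of_le hR.le, integral_rpow (Or.inl (by linarith))]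
  · rw [show α + 2 + 1 = α + 3 by ring, Real.zero_rpow (by linarith), sub_zero]
  · filter_upwards [ae_restrict_mem measurableSet_Ioc] with r hr
    exact Real.rpow_nonneg hr.1.le _

theorem outer_integral {α R : ℝ} (hα : α < -3) (hR : 0 < R) :
    ∫⁻ x : E3, (Set.Ioi R).indicator (fun r : ℝ => ENNReal.ofReal (r ^ α)) ‖x‖ =
      (volume : Measure E3).toSphere Set.univ * ENNReal.ofReal (-R ^ (α + 3) / (α + 3)) := by
  rw [radial_lintegral _ (Measurable.indicator (by fun_prop) measurableSet_Ioi)]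
  congr 1
  have h1 : ∀ r : ℝ, ENNReal.ofReal (r ^ 2) *
      (Set.Ioi R).indicator (fun r : ℝ => ENNReal.ofReal (r ^ α)) r =
      (Set.Ioi R).indicator (fun r : ℝ => ENNReal.ofReal (r ^ (α + 2))) r := by
    intro r
    by_cases hr : r ∈ Set.Ioi R
    · rw [Set.indicator_of_mem hr, Set.indicator_of_mem hr, ← ENNReal.ofReal_mul (by positivity),
        Real.rpow_add (hR.trans hr), mul_comm, Real.rpow_two]
    · simp [Set.indicator_of_notMem hr]
  simp_rw [h1]
  rw [setLIntegral_indicator measurableSet_Ioi,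
    Set.inter_eq_left.2 (Set.Ioi_subset_Ioi hR.le),
    ← ofReal_integral_eq_lintegral_ofReal
      (integrableOn_Ioi_rpow_of_lt (by linarith : α + 2 < -1) hR),
    integral_Ioi_rpow_of_lt (by linarith) hR]
  · rw [show α + 2 + 1 = α + 3 by ring]
  · filter_upwards [ae_restrict_mem measurableSet_Ioi] with r hr
    exact Real.rpow_nonneg (hR.trans hr).le _

theorem pole_integral {R : ℝ} (hR : 0 < R) :
    ∫⁻ x : E3, (Set.Ioc 0 R).indicator
      (fun r : ℝ => ENNReal.ofReal ((Real.exp (-r) / r) ^ 2)) ‖x‖ ≤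
      (volume : Measure E3).toSphere Set.univ * ENNReal.ofReal (min R 1) := by
  rw [radial_lintegral _ (Measurable.indicator (by fun_prop) measurableSet_Ioc)]
  gcongr
  have h1 : ∀ r : ℝ, ENNReal.ofReal (r ^ 2) *
      (Set.Ioc 0 R).indicator (fun r : ℝ => ENNReal.ofReal ((Real.exp (-r) / r) ^ 2)) r =
      (Set.Ioc 0 R).indicator (fun r : ℝ => ENNReal.ofReal (Real.exp (-r) ^ 2)) r := by
    intro r
    by_cases hr : r ∈ Set.Ioc 0 R
    · rw [Set.indicator_of_mem hr, Set.indicator_of_mem hr, ← ENNReal.ofReal_mul (by positivity)]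
      have := hr.1.ne'
      congr 1
      field_simp
    · simp [Set.indicator_of_notMem hr]
  simp_rw [h1]
  rw [setLIntegral_indicator measurableSet_Ioc,
    Set.inter_eq_left.2 Set.Ioc_subset_Ioi_self, ENNReal.ofReal_min]
  refine le_min ?_ ?_
  · calc _ ≤ ∫⁻ r in Set.Ioc 0 R, 1 := by
          refine setLIntegral_mono measurable_const fun r hr => ?_
          rw [ENNReal.ofReal_le_one]
          exact pow_le_one₀ (Real.exp_pos _).le (Real.exp_le_one_iff.2 (by linarith [hr.1]))
      _ = _ := by simp
  · calc _ ≤ ∫⁻ r in Set.Ioi (0 : ℝ), ENNReal.ofReal (Real.exp (-r)) := by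
          refine (lintegral_mono_set Set.Ioc_subset_Ioi_self).trans ?_
          refine setLIntegral_mono (by fun_prop) fun r hr => ?_
          apply ENNReal.ofReal_le_ofReal
          have h2 : Real.exp (-r) ≤ 1 := Real.exp_le_one_iff.2 (by linarith [hr.out])
          nlinarith [Real.exp_pos (-r)]
      _ = _ := by
          rw [← ofReal_integral_eq_lintegral_ofReal (integrableOn_exp_neg_Ioi 0)
            (Filter.Eventually.of_forall fun r => (Real.exp_pos _).le), integral_exp_neg_Ioi_zero]

/-- The square of the Yukawa kernel cut off to the shell `‖y‖ / 2 < ‖x‖ ≤ 2 ‖y‖`. -/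
noncomputable def shellSq (y x : E3) : ENNReal :=
  {x : E3 | ‖y‖ / 2 < ‖x‖ ∧ ‖x‖ ≤ 2 * ‖y‖}.indicator
    (fun x => ENNReal.ofReal ((Real.exp (-‖x - y‖) / ‖x - y‖) ^ 2)) x

theorem measurable_shellSq (y : E3) : Measurable (shellSq y) := by
  refine Measurable.indicator (by fun_prop) ?_
  exact (measurableSet_lt measurable_const measurable_norm).inter
    (measurableSet_le measurable_norm measurable_const)

theorem shell_integral (y : E3) (hy : y ≠ 0) :
    ∫⁻ x, shellSq y x ≤ (volume : Measure E3).toSphere Set.univ *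
      ENNReal.ofReal (min (3 * ‖y‖) 1) := by
  have hs : 0 < ‖y‖ := norm_pos_iff.2 hy
  refine le_trans ?_ (pole_integral (by positivity : 0 < 3 * ‖y‖))
  rw [← lintegral_sub_right_eq_self (fun x : E3 => (Set.Ioc 0 (3 * ‖y‖)).indicator
      (fun r : ℝ => ENNReal.ofReal ((Real.exp (-r) / r) ^ 2)) ‖x‖) y]
  refine lintegral_mono fun x => ?_
  rw [shellSq]
  by_cases hx : x ∈ {x : E3 | ‖y‖ / 2 < ‖x‖ ∧ ‖x‖ ≤ 2 * ‖y‖}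
  · rw [Set.indicator_of_mem hx]
    by_cases hxy : x - y = 0
    · simp [hxy]
    · rw [Set.indicator_of_mem]
      exact ⟨norm_pos_iff.2 hxy, by linarith [norm_sub_le x y, hx.2]⟩
  · rw [Set.indicator_of_notMem hx]
    exact zero_le

theorem mean_sq_le (x y : E3) (hx1 : ‖y‖ / 2 < ‖x‖) (hx2 : ‖x‖ ≤ 2 * ‖y‖) :
    ENNReal.ofReal ((∫ ω, Real.exp (-‖‖x‖ • (ω : E3) - y‖) /
      ‖‖x‖ • (ω : E3) - y‖ ∂sphereProb) ^ 2) ≤ ∫⁻ ω, shellSq y (‖x‖ • (ω : E3)) ∂sphereProb := by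
  have h1 : ∀ ω : Metric.sphere (0 : E3) 1, shellSq y (‖x‖ • (ω : E3)) =
      ‖Real.exp (-‖‖x‖ • (ω : E3) - y‖) / ‖‖x‖ • (ω : E3) - y‖‖ₑ ^ 2 := by
    intro ω
    have : ‖‖x‖ • (ω : E3)‖ = ‖x‖ := by
      rw [norm_smul, norm_eq_of_mem_sphere]; simp
    rw [shellSq, Set.indicator_of_mem (by simp only [Set.mem_ofPred_eq, this]; exact ⟨hx1, hx2⟩),
      ENNReal.ofReal_pow (by positivity), Real.enorm_eq_ofReal (by positivity)]
  simp_rw [h1]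
  refine le_trans ?_ (jensen_sq _ (by fun_prop))
  rw [← sq_abs, ENNReal.ofReal_pow (abs_nonneg _), ← Real.enorm_eq_ofReal_abs]
  gcongr
  exact enorm_integral_le_lintegral_enorm _

theorem min_one_inv_half {s : ℝ} (hs : 0 < s) : min 1 (s / 2)⁻¹ ≤ 2 * min 1 s⁻¹ := by
  have h : (s / 2)⁻¹ = 2 * s⁻¹ := by field_simp
  rw [h, mul_min_of_nonneg _ _ (by norm_num)]
  exact min_le_min (by norm_num) le_rfl

theorem inner_pointwise (x y : E3) (hy : y ≠ 0) (hxy : ‖x‖ ≤ ‖y‖ / 2) :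
    angularYukawa x y ^ 2 ≤ 256 * min 1 ‖y‖⁻¹ / ‖y‖ ^ 4 * ‖x‖ ^ 2 := by
  have hs : 0 < ‖y‖ := norm_pos_iff.2 hy
  have hn : ∀ ω : Metric.sphere (0 : E3) 1, ‖‖x‖ • (ω : E3)‖ = ‖x‖ := fun ω => by
    rw [norm_smul, norm_eq_of_mem_sphere]; simp
  have h := K_sq_le x y (2 * ‖x‖) (‖y‖ / 2) (by positivity)
    (by linarith [norm_sub_norm_le y x, norm_sub_rev x y])
    (fun ω => by
      linarith [norm_sub_norm_le y (‖x‖ • (ω : E3)), norm_sub_rev (‖x‖ • (ω : E3)) y, hn ω])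
    (fun ω => by
      refine (abs_norm_sub_norm_le _ _).trans ?_
      rw [sub_sub_sub_cancel_right]
      linarith [norm_sub_le x (‖x‖ • (ω : E3)), hn ω])
    (by positivity)
  refine h.trans ?_
  calc _ ≤ (2 * ‖x‖) ^ 2 * (2 * (2 * min 1 ‖y‖⁻¹)) / (‖y‖ / 2) ^ 4 := by
        gcongr
        exact min_one_inv_half hs
    _ = _ := by field_simp; ring

theorem outer_pointwise (x y : E3) (hy : y ≠ 0) (hxy : 2 * ‖y‖ < ‖x‖) :
    angularYukawa x y ^ 2 ≤ 128 * min 1 ‖y‖⁻¹ * ‖y‖ ^ 2 / ‖x‖ ^ 4 := by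
  have hs : 0 < ‖y‖ := norm_pos_iff.2 hy
  have hr : 0 < ‖x‖ := by linarith
  have hn : ∀ ω : Metric.sphere (0 : E3) 1, ‖‖x‖ • (ω : E3)‖ = ‖x‖ := fun ω => by
    rw [norm_smul, norm_eq_of_mem_sphere]; simp
  have h := K_sq_le x y (2 * ‖y‖) (‖x‖ / 2) (by positivity)
    (by linarith [norm_sub_norm_le x y])
    (fun ω => by linarith [norm_sub_norm_le (‖x‖ • (ω : E3)) y, hn ω])
    (fun ω => by
      have h1 := norm_sub_norm_le (‖x‖ • (ω : E3)) y
      have h2 := norm_sub_le (‖x‖ • (ω : E3)) y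
      have h3 := norm_sub_norm_le x y
      have h4 := norm_sub_le x y
      rw [hn] at h1 h2
      rw [abs_le]
      constructor <;> linarith)
    (by positivity)
  refine h.trans ?_
  calc _ ≤ (2 * ‖y‖) ^ 2 * (2 * min 1 ‖y‖⁻¹) / (‖x‖ / 2) ^ 4 := by
        gcongr
        linarith
    _ = _ := by field_simp; ring

theorem weight_shell {s r β : ℝ} (hs : 0 < s) (h1 : s / 2 < r) (h2 : r ≤ 2 * s) :
    r ^ β ≤ 2 ^ |β| * s ^ β := by
  have hr : 0 < r := by linarith
  have h : (r / s) ^ β ≤ 2 ^ |β| := by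
    rcases le_total 0 β with hb | hb
    · rw [abs_of_nonneg hb]
      exact Real.rpow_le_rpow (by positivity) (by rw [div_le_iff₀ hs]; linarith) hb
    · rw [abs_of_nonpos hb, Real.rpow_neg (by norm_num), ← Real.inv_rpow (by norm_num)]
      refine Real.rpow_le_rpow_of_nonpos (by norm_num) ?_ hb
      rw [le_div_iff₀ hs]; linarith
  rwa [Real.div_rpow hr.le hs.le, div_le_iff₀ (by positivity)] at h

theorem pointwise_bound (q : ℝ) (x y : E3) (hx : x ≠ 0) (hy : y ≠ 0) :
    ENNReal.ofReal ((‖x‖ ^ (-1 + q)) ^ 2 * angularYukawa x y ^ 2) ≤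
      ENNReal.ofReal (256 * min 1 ‖y‖⁻¹ / ‖y‖ ^ 4) *
        (Set.Ioc 0 (‖y‖ / 2)).indicator (fun r : ℝ => ENNReal.ofReal (r ^ (2 * q))) ‖x‖ +
      ENNReal.ofReal (128 * min 1 ‖y‖⁻¹ * ‖y‖ ^ 2) *
        (Set.Ioi (2 * ‖y‖)).indicator (fun r : ℝ => ENNReal.ofReal (r ^ (2 * q - 6))) ‖x‖ +
      ENNReal.ofReal (2 * (2 ^ |2 * q - 2| * ‖y‖ ^ (2 * q - 2))) *
        (shellSq y x + ∫⁻ ω, shellSq y (‖x‖ • (ω : E3)) ∂sphereProb) := by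
  have hs : 0 < ‖y‖ := norm_pos_iff.2 hy
  have hr : 0 < ‖x‖ := norm_pos_iff.2 hx
  have hD : 0 ≤ min 1 ‖y‖⁻¹ := by positivity
  have hw : (‖x‖ ^ (-1 + q)) ^ 2 = ‖x‖ ^ (2 * q - 2) := by
    rw [← Real.rpow_natCast, ← Real.rpow_mul hr.le]
    congr 1
    push_cast
    ring
  rw [hw]
  rcases le_or_gt ‖x‖ (‖y‖ / 2) with h1 | h1
  · refine le_trans ?_ (le_add_right (le_add_right le_rfl))
    rw [Set.indicator_of_mem (Set.mem_Ioc.2 ⟨hr, h1⟩), ← ENNReal.ofReal_mul (by positivity)]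
    apply ENNReal.ofReal_le_ofReal
    refine (mul_le_mul_of_nonneg_left (inner_pointwise x y hy h1) (by positivity)).trans_eq ?_
    rw [show 2 * q = (2 * q - 2) + 2 by ring, Real.rpow_add hr, Real.rpow_two]
    ring_nf
  rcases le_or_gt ‖x‖ (2 * ‖y‖) with h2 | h2
  · refine le_trans ?_ (le_add_left le_rfl)
    have hsh : shellSq y x = ENNReal.ofReal ((Real.exp (-‖x - y‖) / ‖x - y‖) ^ 2) := by
      rw [shellSq, Set.indicator_of_mem]; exact ⟨h1, h2⟩
    rw [hsh]
    have hmean := mean_sq_le x y h1 h2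
    set a := Real.exp (-‖x - y‖) / ‖x - y‖ with ha
    set b := ∫ ω, Real.exp (-‖‖x‖ • (ω : E3) - y‖) / ‖‖x‖ • (ω : E3) - y‖ ∂sphereProb with hb
    have hK : angularYukawa x y = a - b := rfl
    rw [hK]
    clear_value a b
    refine le_trans (b := ENNReal.ofReal (2 * (2 ^ |2 * q - 2| * ‖y‖ ^ (2 * q - 2))) *
      (ENNReal.ofReal (a ^ 2) + ENNReal.ofReal (b ^ 2))) ?_ (by gcongr)
    rw [← ENNReal.ofReal_add (by positivity) (by positivity), ← ENNReal.ofReal_mul (by positivity)]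
    apply ENNReal.ofReal_le_ofReal
    calc _ ≤ (2 ^ |2 * q - 2| * ‖y‖ ^ (2 * q - 2)) * (2 * (a ^ 2 + b ^ 2)) := by
          gcongr
          · exact weight_shell hs h1 h2
          · nlinarith [sq_nonneg (a + b)]
      _ = _ := by ring
  · refine le_trans ?_ (le_add_right (le_add_left le_rfl))
    rw [Set.indicator_of_mem (Set.mem_Ioi.2 h2), ← ENNReal.ofReal_mul (by positivity)]
    apply ENNReal.ofReal_le_ofReal
    refine (mul_le_mul_of_nonneg_left (outer_pointwise x y hy h2) (by positivity)).trans_eq ?_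
    rw [show 2 * q - 2 = (2 * q - 6) + (4 : ℕ) by push_cast; ring, Real.rpow_add hr,
      Real.rpow_natCast]
    field_simp

theorem lintegral_bound (q : ℝ) (hq : |q| < 3 / 2) :
    ∃ C : ℝ, 0 < C ∧ ∀ y : E3, y ≠ 0 →
      ∫⁻ x : E3, ENNReal.ofReal ((‖x‖ ^ (-1 + q)) ^ 2 * angularYukawa x y ^ 2) ≤
        ENNReal.ofReal (C * (‖y‖ ^ (2 * q - 1) * min 1 ‖y‖⁻¹)) := by
  obtain ⟨hq1, hq2⟩ := abs_lt.1 hq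
  set A := (volume : Measure E3).toSphere Set.univ with hA
  have hAt : A ≠ ⊤ := measure_ne_top _ _
  have hA0 : 0 < A.toReal := ENNReal.toReal_pos sphere_univ_ne_zero hAt
  have hp1 : 0 < 2 * q + 3 := by linarith
  have hp2 : 0 < 3 - 2 * q := by linarith
  refine ⟨A.toReal * (256 * (1 / 2) ^ (2 * q + 3) / (2 * q + 3) +
    128 * 2 ^ (2 * q - 3) / (3 - 2 * q) + 12 * 2 ^ |2 * q - 2|), by positivity, fun y hy => ?_⟩
  have hs : 0 < ‖y‖ := norm_pos_iff.2 hy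
  have hae : ∀ᵐ x : E3, x ≠ 0 := by
    simp [ae_iff]
  refine (lintegral_mono_ae (hae.mono fun x hx => pointwise_bound q x y hx hy)).trans ?_
  have m1 : Measurable fun x : E3 => (Set.Ioc 0 (‖y‖ / 2)).indicator
      (fun r : ℝ => ENNReal.ofReal (r ^ (2 * q))) ‖x‖ :=
    (Measurable.indicator (by fun_prop) measurableSet_Ioc).comp measurable_norm
  have m2 : Measurable fun x : E3 => (Set.Ioi (2 * ‖y‖)).indicator
      (fun r : ℝ => ENNReal.ofReal (r ^ (2 * q - 6))) ‖x‖ :=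
    (Measurable.indicator (by fun_prop) measurableSet_Ioi).comp measurable_norm
  rw [lintegral_add_left (by fun_prop), lintegral_add_left (by fun_prop),
    lintegral_const_mul _ m1, lintegral_const_mul _ m2, lintegral_const_mul' _ _ ENNReal.ofReal_ne_top,
    lintegral_add_left (measurable_shellSq y), average_lintegral _ (measurable_shellSq y),
    inner_integral (by linarith) (by positivity), outer_integral (by linarith) (by positivity)]
  have hsh := shell_integral y hy
  refine (add_le_add_right (mul_le_mul_right (add_le_add hsh hsh) _) _).trans ?_
  rw [← hA, ← ENNReal.ofReal_toReal hAt]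
  have hmin : 0 ≤ min (3 * ‖y‖) 1 := by positivity
  have hD : 0 ≤ min 1 ‖y‖⁻¹ := by positivity
  have e2 : -(2 * ‖y‖) ^ (2 * q - 6 + 3) / (2 * q - 6 + 3) =
      (2 * ‖y‖) ^ (2 * q - 3) / (3 - 2 * q) := by
    rw [show 2 * q - 6 + 3 = -(3 - 2 * q) by ring, neg_div_neg_eq, neg_sub]
  rw [e2]
  rw [← ENNReal.ofReal_mul (by positivity), ← ENNReal.ofReal_mul (by positivity),
    ← ENNReal.ofReal_mul (by positivity), ← ENNReal.ofReal_mul (by positivity),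
    ← ENNReal.ofReal_mul (by positivity), ← ENNReal.ofReal_add (by positivity) (by positivity),
    ← ENNReal.ofReal_add (by positivity) (by positivity),
    ← ENNReal.ofReal_mul (by positivity), ← ENNReal.ofReal_add (by positivity) (by positivity)]
  apply ENNReal.ofReal_le_ofReal
  have hm3 : min (3 * ‖y‖) 1 ≤ 3 * (‖y‖ * min 1 ‖y‖⁻¹) := by
    rw [mul_min_of_nonneg _ _ hs.le, mul_min_of_nonneg _ _ (by norm_num), mul_inv_cancel₀ hs.ne']
    exact min_le_min (by linarith) (by norm_num)
  have r1 : (‖y‖ / 2) ^ (2 * q + 3) = (1 / 2) ^ (2 * q + 3) * (‖y‖ ^ (2 * q - 1) * ‖y‖ ^ 4) := by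
    rw [← Real.rpow_natCast, ← Real.rpow_add hs, ← mul_one_div, mul_comm,
      Real.mul_rpow (by norm_num) hs.le]
    congr 2
    push_cast
    ring
  have r2 : ‖y‖ ^ 2 * (2 * ‖y‖) ^ (2 * q - 3) = 2 ^ (2 * q - 3) * ‖y‖ ^ (2 * q - 1) := by
    rw [Real.mul_rpow (by norm_num) hs.le, mul_left_comm, ← Real.rpow_natCast, ← Real.rpow_add hs]
    congr 2
    push_cast
    ring
  have r3 : ‖y‖ ^ (2 * q - 2) * ‖y‖ = ‖y‖ ^ (2 * q - 1) := by
    rw [← Real.rpow_add_one hs.ne']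
    congr 1
    ring
  rw [r1]
  calc _ ≤ 256 * min 1 ‖y‖⁻¹ / ‖y‖ ^ 4 * (A.toReal *
        ((1 / 2) ^ (2 * q + 3) * (‖y‖ ^ (2 * q - 1) * ‖y‖ ^ 4) / (2 * q + 3))) +
        128 * min 1 ‖y‖⁻¹ * ‖y‖ ^ 2 * (A.toReal * ((2 * ‖y‖) ^ (2 * q - 3) / (3 - 2 * q))) +
        2 * (2 ^ |2 * q - 2| * ‖y‖ ^ (2 * q - 2)) *
          (A.toReal * (3 * (‖y‖ * min 1 ‖y‖⁻¹)) + A.toReal * (3 * (‖y‖ * min 1 ‖y‖⁻¹))) := by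
        gcongr
    _ = A.toReal * min 1 ‖y‖⁻¹ * (256 * (1 / 2) ^ (2 * q + 3) / (2 * q + 3) * ‖y‖ ^ (2 * q - 1) +
        128 * (‖y‖ ^ 2 * (2 * ‖y‖) ^ (2 * q - 3)) / (3 - 2 * q) +
        12 * 2 ^ |2 * q - 2| * (‖y‖ ^ (2 * q - 2) * ‖y‖)) := by
        field_simp
        ring
    _ = _ := by
        rw [r2, r3]
        simp only [ENNReal.toReal_ofReal hA0.le]
        ring

theorem one_sign_bound (q : ℝ) (hq : |q| < 3 / 2) :
    ∃ C : ℝ, 0 < C ∧ ∀ y : E3, y ≠ 0 →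
      Real.sqrt (∫ x : E3, (‖x‖ ^ (-1 + q)) ^ 2 * (angularYukawa x y) ^ 2) ≤
        C * ‖y‖ ^ q * min (‖y‖ ^ (-(1 : ℝ) / 2)) (‖y‖ ^ (-(1 : ℝ))) := by
  obtain ⟨C, hC, h⟩ := lintegral_bound q hq
  refine ⟨Real.sqrt C, Real.sqrt_pos.2 hC, fun y hy => ?_⟩
  have hs : 0 < ‖y‖ := norm_pos_iff.2 hy
  have hD : 0 ≤ min 1 ‖y‖⁻¹ := by positivity
  have hM : 0 ≤ min (‖y‖ ^ (-(1 : ℝ) / 2)) (‖y‖ ^ (-(1 : ℝ))) := by positivity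
  have hI : ∫ x : E3, (‖x‖ ^ (-1 + q)) ^ 2 * (angularYukawa x y) ^ 2 ≤
      C * (‖y‖ ^ (2 * q - 1) * min 1 ‖y‖⁻¹) := by
    by_cases hint : Integrable fun x : E3 => (‖x‖ ^ (-1 + q)) ^ 2 * (angularYukawa x y) ^ 2
    · rw [← ENNReal.ofReal_le_ofReal_iff (by positivity),
        ofReal_integral_eq_lintegral_ofReal hint
          (Filter.Eventually.of_forall fun x => by positivity)]
      exact h y hy
    · rw [integral_undef hint]
      positivity
  rw [Real.sqrt_le_left (by positivity)]
  refine hI.trans_eq ?_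
  have hmin : min (‖y‖ ^ (-(1 : ℝ) / 2)) (‖y‖ ^ (-(1 : ℝ))) ^ 2 = ‖y‖⁻¹ * min 1 ‖y‖⁻¹ := by
    have e1 : (‖y‖ ^ (-(1 : ℝ) / 2)) ^ 2 = ‖y‖⁻¹ := by
      rw [← Real.rpow_natCast, ← Real.rpow_mul hs.le, ← Real.rpow_neg_one]
      norm_num
    have e2 : (‖y‖ ^ (-(1 : ℝ))) ^ 2 = ‖y‖⁻¹ * ‖y‖⁻¹ := by
      rw [Real.rpow_neg_one]; ring
    have hmono : min (‖y‖ ^ (-(1 : ℝ) / 2)) (‖y‖ ^ (-(1 : ℝ))) ^ 2 =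
        min ((‖y‖ ^ (-(1 : ℝ) / 2)) ^ 2) ((‖y‖ ^ (-(1 : ℝ))) ^ 2) := by
      rcases le_total (‖y‖ ^ (-(1 : ℝ) / 2)) (‖y‖ ^ (-(1 : ℝ))) with hle | hle
      · rw [min_eq_left hle, min_eq_left (by gcongr)]
      · rw [min_eq_right hle, min_eq_right (by gcongr)]
    rw [hmono, e1, e2, mul_min_of_nonneg _ _ (by positivity), mul_one]
  have hpow : ‖y‖ ^ (2 * q - 1) = (‖y‖ ^ q) ^ 2 * ‖y‖⁻¹ := by
    rw [← Real.rpow_natCast, ← Real.rpow_mul hs.le, ← Real.rpow_neg_one, ← Real.rpow_add hs]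
    congr 1
    push_cast
    ring
  rw [mul_pow, mul_pow, hmin, Real.sq_sqrt hC.le, hpow]
  ring


/-- Weighted `L²` bound on the angular Yukawa kernel: for `|p| < 3/2` there is a constant
`C_p` such that for every `y ≠ 0` and either choice of sign `ε = ±1`,
`‖ |x|^{-1+εp} K(x) ‖_{L²_x} ≤ C_p |y|^{εp} min(|y|^{-1/2}, |y|^{-1})`. -/
theorem angularYukawa_weighted_L2_bound (p : ℝ) (hp : |p| < 3 / 2) :
    ∃ C : ℝ, 0 < C ∧ ∀ y : EuclideanSpace ℝ (Fin 3), y ≠ 0 → ∀ ε : ℝ, ε = 1 ∨ ε = -1 →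
      Real.sqrt (∫ x : EuclideanSpace ℝ (Fin 3),
          (‖x‖ ^ (-1 + ε * p)) ^ 2 * (angularYukawa x y) ^ 2) ≤
        C * ‖y‖ ^ (ε * p) * min (‖y‖ ^ (-(1 : ℝ) / 2)) (‖y‖ ^ (-(1 : ℝ))) := by
  obtain ⟨C₁, hC₁, h₁⟩ := one_sign_bound p hp
  obtain ⟨C₂, hC₂, h₂⟩ := one_sign_bound (-p) (by rwa [abs_neg])
  refine ⟨max C₁ C₂, lt_max_of_lt_left hC₁, fun y hy ε hε => ?_⟩
  have hs : 0 < ‖y‖ := norm_pos_iff.2 hy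
  have hM : 0 ≤ min (‖y‖ ^ (-(1 : ℝ) / 2)) (‖y‖ ^ (-(1 : ℝ))) := by positivity
  rcases hε with rfl | rfl
  · rw [one_mul]
    refine (h₁ y hy).trans ?_
    gcongr
    exact le_max_left _ _
  · rw [neg_one_mul]
    refine (h₂ y hy).trans ?_
    gcongr
    exact le_max_right _ _
end
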